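/- Let μ : (0, ∞) → ℝ be twice differentiable. For the conformally flat-type diagonal metric ḡ = e^{μ(ρ)}·diag(1, ρ², ρ² sin²θ, 1) in coordinates (ρ,θ,φ,τ) on ρ > 0, 0 < θ < π, the covariant Riemann–Christoffel curvature components satisfy: R̄_{1212} = −½ ρ e^{μ}(μ′ + ρμ″); R̄_{1313} = −½ ρ e^{μ} sin²θ (μ′ + ρμ″); R̄_{2323} = −ρ³ e^{μ} μ′ sin²θ (1 + ¼ρμ′); R̄_{1414} = −½ e^{μ} μ″; R̄_{2424} = −½ ρ e^{μ} μ′ (1 + ½ρμ′). -/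

import Mathlib

noncomputable section

/-- Partial derivative of a scalar function on `ℝ⁴` in the `i`-th coordinate direction. -/
def pd (f : (Fin 4 → ℝ) → ℝ) (i : Fin 4) (x : Fin 4 → ℝ) : ℝ :=
  fderiv ℝ f x (Pi.single i 1)

/-- Christoffel symbols of the first kind,
`Γ_{αβ,γ} = ½ (∂_{q^α} g_{βγ} + ∂_{q^β} g_{αγ} - ∂_{q^γ} g_{αβ})`. -/
def Γ1 (g : (Fin 4 → ℝ) → Matrix (Fin 4) (Fin 4) ℝ) (α β γ : Fin 4) (x : Fin 4 → ℝ) : ℝ :=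
  (1 / 2) * (pd (fun y => g y β γ) α x + pd (fun y => g y α γ) β x - pd (fun y => g y α β) γ x)

/-- Covariant Riemann–Christoffel curvature components
`R_{αβδγ} = ∂_{q^δ} Γ_{βγ,α} - ∂_{q^γ} Γ_{βδ,α} + Σ_{λσ} g^{λσ} (Γ_{βδ,λ} Γ_{αγ,σ} - Γ_{βγ,λ} Γ_{αδ,σ})`. -/
def Rcov (g : (Fin 4 → ℝ) → Matrix (Fin 4) (Fin 4) ℝ) (α β δ γ : Fin 4) (x : Fin 4 → ℝ) : ℝ :=
  pd (Γ1 g β γ α) δ x - pd (Γ1 g β δ α) γ x +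
    ∑ lam, ∑ sig, (g x)⁻¹ lam sig *
      (Γ1 g β δ lam x * Γ1 g α γ sig x - Γ1 g β γ lam x * Γ1 g α δ sig x)

/-- The conformally flat-type diagonal metric
`ḡ = e^{μ(ρ)} · diag (1, ρ², ρ² sin² θ, 1)` in coordinates `(ρ, θ, φ, τ) = (x 0, x 1, x 2, x 3)`. -/
def gConf (μ : ℝ → ℝ) (x : Fin 4 → ℝ) : Matrix (Fin 4) (Fin 4) ℝ :=
  Real.exp (μ (x 0)) •
    Matrix.diagonal ![(1 : ℝ), (x 0) ^ 2, (x 0) ^ 2 * Real.sin (x 1) ^ 2, 1]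

theorem pd_prod (f : (Fin 4 → ℝ) → ℝ) (a b : ℝ → ℝ) (a' b' : ℝ) (x : Fin 4 → ℝ)
    (ha : HasDerivAt a a' (x 0)) (hb : HasDerivAt b b' (x 1))
    (hf : f =ᶠ[nhds x] fun y => a (y 0) * b (y 1)) (i : Fin 4) :
    pd f i x = ![a' * b (x 1), a (x 0) * b', 0, 0] i := by
  have h0 : HasFDerivAt (fun y : Fin 4 → ℝ => y 0) (ContinuousLinearMap.proj (R := ℝ) (φ := fun _ : Fin 4 => ℝ) 0) x :=
    hasFDerivAt_apply 0 x
  have h1 : HasFDerivAt (fun y : Fin 4 → ℝ => y 1) (ContinuousLinearMap.proj (R := ℝ) (φ := fun _ : Fin 4 => ℝ) 1) x :=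
    hasFDerivAt_apply 1 x
  have ha' := HasDerivAt.comp_hasFDerivAt x ha h0
  have hb' := HasDerivAt.comp_hasFDerivAt x hb h1
  have h := (ha'.mul hb').congr_of_eventuallyEq hf
  unfold pd
  rw [h.fderiv]
  fin_cases i <;> simp [mul_comm]

def cA (μ : ℝ → ℝ) (i : Fin 4) (r : ℝ) : ℝ := Real.exp (μ r) * ![1, r ^ 2, r ^ 2, 1] i
def cB (i : Fin 4) (t : ℝ) : ℝ := ![1, 1, Real.sin t ^ 2, 1] i
def cA' (μ : ℝ → ℝ) (i : Fin 4) (r : ℝ) : ℝ :=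
  Real.exp (μ r) * ![deriv μ r, deriv μ r * r ^ 2 + 2 * r, deriv μ r * r ^ 2 + 2 * r, deriv μ r] i
def cA'' (μ : ℝ → ℝ) (i : Fin 4) (r : ℝ) : ℝ :=
  Real.exp (μ r) * deriv μ r *
    ![deriv μ r, deriv μ r * r ^ 2 + 2 * r, deriv μ r * r ^ 2 + 2 * r, deriv μ r] i +
  Real.exp (μ r) * ![deriv (deriv μ) r, deriv (deriv μ) r * r ^ 2 + deriv μ r * (2 * r) + 2,
    deriv (deriv μ) r * r ^ 2 + deriv μ r * (2 * r) + 2, deriv (deriv μ) r] i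
def cB' (i : Fin 4) (t : ℝ) : ℝ := ![0, 0, 2 * Real.sin t * Real.cos t, 0] i
def cB'' (i : Fin 4) (t : ℝ) : ℝ := ![0, 0, 2 * (Real.cos t ^ 2 - Real.sin t ^ 2), 0] i

theorem hasA (μ : ℝ → ℝ) (i : Fin 4) (r : ℝ) (h : DifferentiableAt ℝ μ r) :
    HasDerivAt (cA μ i) (cA' μ i r) r := by
  have he := h.hasDerivAt.exp
  have h2 := he.mul (hasDerivAt_pow 2 r)
  unfold cA cA'
  fin_cases i
  · simpa using he
  · refine (h2.congr_deriv ?_)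
    simp; ring
  · refine (h2.congr_deriv ?_)
    simp; ring
  · simpa using he

theorem hasA' (μ : ℝ → ℝ) (i : Fin 4) (r : ℝ) (h : DifferentiableAt ℝ μ r)
    (h' : DifferentiableAt ℝ (deriv μ) r) :
    HasDerivAt (cA' μ i) (cA'' μ i r) r := by
  have he := h.hasDerivAt.exp
  have h1 := he.mul h'.hasDerivAt
  have h2 := he.mul ((h'.hasDerivAt.mul (hasDerivAt_pow 2 r)).add ((hasDerivAt_id r).const_mul 2))
  unfold cA' cA''
  fin_cases i
  · exact h1
  · refine (h2.congr_deriv ?_)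
    simp
  · refine (h2.congr_deriv ?_)
    simp
  · exact h1

theorem hasB (i : Fin 4) (r : ℝ) : HasDerivAt (cB i) (cB' i r) r := by
  unfold cB cB'
  fin_cases i
  · exact hasDerivAt_const _ _
  · exact hasDerivAt_const _ _
  · refine ((Real.hasDerivAt_sin r).pow 2).congr_deriv ?_
    simp
  · exact hasDerivAt_const _ _

theorem hasB' (i : Fin 4) (r : ℝ) : HasDerivAt (cB' i) (cB'' i r) r := by
  unfold cB' cB''
  fin_cases i
  · exact hasDerivAt_const _ _
  · exact hasDerivAt_const _ _
  · refine (((Real.hasDerivAt_sin r).const_mul 2).mul (Real.hasDerivAt_cos r)).congr_deriv ?_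
    simp; ring
  · exact hasDerivAt_const _ _

def cD (μ : ℝ → ℝ) (i j k : Fin 4) (x : Fin 4 → ℝ) : ℝ :=
  if i = j then ![cA' μ i (x 0) * cB i (x 1), cA μ i (x 0) * cB' i (x 1), 0, 0] k else 0

theorem gConf_eq (μ : ℝ → ℝ) (x : Fin 4 → ℝ) :
    gConf μ x = Matrix.diagonal (fun i => cA μ i (x 0) * cB i (x 1)) := by
  unfold gConf cA cB
  ext i j
  fin_cases i <;> fin_cases j <;> simp [Matrix.diagonal, mul_assoc]

theorem pd_g (μ : ℝ → ℝ) (i j k : Fin 4) (x : Fin 4 → ℝ) (h : DifferentiableAt ℝ μ (x 0)) :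
    pd (fun y => gConf μ y i j) k x = cD μ i j k x := by
  unfold cD
  split_ifs with hij
  · subst hij
    refine pd_prod _ _ _ _ _ x (hasA μ i _ h) (hasB i _) ?_ k
    exact Filter.Eventually.of_forall fun y => by simp [gConf_eq]
  · have : (fun y => gConf μ y i j) = fun _ => (0 : ℝ) := by
      funext y
      simp [gConf_eq, Matrix.diagonal_apply_ne _ hij]
    rw [this]
    simp [pd]

theorem Γ1_eq (μ : ℝ → ℝ) (i j k : Fin 4) (x : Fin 4 → ℝ) (h : DifferentiableAt ℝ μ (x 0)) :
    Γ1 (gConf μ) i j k x = (1 / 2) * (cD μ j k i x + cD μ i k j x - cD μ i j k x) := by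
  unfold Γ1
  rw [pd_g μ _ _ _ x h, pd_g μ _ _ _ x h, pd_g μ _ _ _ x h]

theorem pd_cΓ0 (μ : ℝ → ℝ) (hμ : DifferentiableOn ℝ μ (Set.Ioi 0))
    (hμ' : DifferentiableOn ℝ (deriv μ) (Set.Ioi 0)) (x : Fin 4 → ℝ) (hx : 0 < x 0)
    (c : ℝ) (i j k m l : Fin 4)
    (hc : ∀ y : Fin 4 → ℝ, (1 / 2) * (cD μ j k i y + cD μ i k j y - cD μ i j k y)
      = c * cA' μ m (y 0) * cB m (y 1)) :
    pd (Γ1 (gConf μ) i j k) l x =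
      ![c * cA'' μ m (x 0) * cB m (x 1), c * cA' μ m (x 0) * cB' m (x 1), 0, 0] l := by
  have d1 := hμ.differentiableAt (Ioi_mem_nhds hx)
  have d2 := hμ'.differentiableAt (Ioi_mem_nhds hx)
  refine pd_prod _ (fun r => c * cA' μ m r) _ _ _ x ((hasA' μ m _ d1 d2).const_mul c) (hasB m _) ?_ l
  have : ∀ᶠ y : Fin 4 → ℝ in nhds x, 0 < y 0 :=
    (continuous_apply 0).continuousAt.eventually (lt_mem_nhds hx)
  filter_upwards [this] with y hy
  rw [Γ1_eq μ _ _ _ y (hμ.differentiableAt (Ioi_mem_nhds hy)), hc]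

theorem pd_cΓ1 (μ : ℝ → ℝ) (hμ : DifferentiableOn ℝ μ (Set.Ioi 0))
    (x : Fin 4 → ℝ) (hx : 0 < x 0)
    (c : ℝ) (i j k m l : Fin 4)
    (hc : ∀ y : Fin 4 → ℝ, (1 / 2) * (cD μ j k i y + cD μ i k j y - cD μ i j k y)
      = c * cA μ m (y 0) * cB' m (y 1)) :
    pd (Γ1 (gConf μ) i j k) l x =
      ![c * cA' μ m (x 0) * cB' m (x 1), c * cA μ m (x 0) * cB'' m (x 1), 0, 0] l := by
  have d1 := hμ.differentiableAt (Ioi_mem_nhds hx)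
  refine pd_prod _ (fun r => c * cA μ m r) _ _ _ x ((hasA μ m _ d1).const_mul c) (hasB' m _) ?_ l
  have : ∀ᶠ y : Fin 4 → ℝ in nhds x, 0 < y 0 :=
    (continuous_apply 0).continuousAt.eventually (lt_mem_nhds hx)
  filter_upwards [this] with y hy
  rw [Γ1_eq μ _ _ _ y (hμ.differentiableAt (Ioi_mem_nhds hy)), hc]

theorem ginv (μ : ℝ → ℝ) (x : Fin 4 → ℝ) (h0 : 0 < x 0) (hs : Real.sin (x 1) ≠ 0) :
    (gConf μ x)⁻¹ = Matrix.diagonal (fun i => (cA μ i (x 0) * cB i (x 1))⁻¹) := by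
  apply Matrix.inv_eq_right_inv
  rw [gConf_eq, Matrix.diagonal_mul_diagonal, ← Matrix.diagonal_one]
  congr 1
  funext i
  apply mul_inv_cancel₀
  have := Real.exp_ne_zero (μ (x 0))
  have := h0.ne'
  fin_cases i <;> simp [cA, cB, *]

theorem R_eq (μ : ℝ → ℝ) (x : Fin 4 → ℝ) (h0 : 0 < x 0) (hs : Real.sin (x 1) ≠ 0) (α β δ γ : Fin 4) :
    Rcov (gConf μ) α β δ γ x =
     pd (Γ1 (gConf μ) β γ α) δ x - pd (Γ1 (gConf μ) β δ α) γ x +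
    ∑ l, (cA μ l (x 0) * cB l (x 1))⁻¹ *
      (Γ1 (gConf μ) β δ l x * Γ1 (gConf μ) α γ l x - Γ1 (gConf μ) β γ l x * Γ1 (gConf μ) α δ l x) := by
  unfold Rcov
  rw [ginv μ x h0 hs]
  simp [Matrix.diagonal_apply]

/-- for the metric `ḡ = e^{μ(ρ)} · diag (1, ρ², ρ² sin² θ, 1)` on `ρ > 0`,
`0 < θ < π` with `μ` twice differentiable, the covariant Riemann–Christoffel curvature
components satisfy `R̄₁₂₁₂ = -½ ρ e^μ (μ' + ρ μ'')`, `R̄₁₃₁₃ = -½ ρ e^μ sin² θ (μ' + ρ μ'')`,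
`R̄₂₃₂₃ = -ρ³ e^μ μ' sin² θ (1 + ¼ ρ μ')`, `R̄₁₄₁₄ = -½ e^μ μ''`,
`R̄₂₄₂₄ = -½ ρ e^μ μ' (1 + ½ ρ μ')`.  (Indices here are 0-based.) -/
theorem riemann_components_conformal (μ : ℝ → ℝ)
    (hμ : DifferentiableOn ℝ μ (Set.Ioi 0))
    (hμ' : DifferentiableOn ℝ (deriv μ) (Set.Ioi 0)) :
    ∀ x : Fin 4 → ℝ, 0 < x 0 → 0 < x 1 → x 1 < Real.pi →
      Rcov (gConf μ) 0 1 0 1 x =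
        -((1 / 2) * (x 0) * Real.exp (μ (x 0)) *
          (deriv μ (x 0) + (x 0) * deriv (deriv μ) (x 0))) ∧
      Rcov (gConf μ) 0 2 0 2 x =
        -((1 / 2) * (x 0) * Real.exp (μ (x 0)) * Real.sin (x 1) ^ 2 *
          (deriv μ (x 0) + (x 0) * deriv (deriv μ) (x 0))) ∧
      Rcov (gConf μ) 1 2 1 2 x =
        -((x 0) ^ 3 * Real.exp (μ (x 0)) * deriv μ (x 0) * Real.sin (x 1) ^ 2 *
          (1 + (1 / 4) * (x 0) * deriv μ (x 0))) ∧
      Rcov (gConf μ) 0 3 0 3 x =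
        -((1 / 2) * Real.exp (μ (x 0)) * deriv (deriv μ) (x 0)) ∧
      Rcov (gConf μ) 1 3 1 3 x =
        -((1 / 2) * (x 0) * Real.exp (μ (x 0)) * deriv μ (x 0) *
          (1 + (1 / 2) * (x 0) * deriv μ (x 0))) := by
  intro x h0 h1 hp
  have hs : Real.sin (x 1) ≠ 0 := (Real.sin_pos_of_pos_of_lt_pi h1 hp).ne'
  have hr : x 0 ≠ 0 := h0.ne'
  have he := Real.exp_ne_zero (μ (x 0))
  have d1 := hμ.differentiableAt (Ioi_mem_nhds h0)
  have G := fun i j k => Γ1_eq μ i j k x d1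
  refine ⟨?_, ?_, ?_, ?_, ?_⟩ <;> rw [R_eq μ x h0 hs]
  · rw [pd_cΓ0 μ hμ hμ' x h0 (-1/2) 1 1 0 1 0 (by intro y; simp [cD]; try ring),
      pd_cΓ1 μ hμ x h0 (1/2) 1 0 0 0 1 (by intro y; simp [cD]; try ring)]
    simp only [G, Fin.sum_univ_four]
    simp [cD, cA, cB, cA', cB', cA'', cB'']
    field_simp
    ring
  · rw [pd_cΓ0 μ hμ hμ' x h0 (-1/2) 2 2 0 2 0 (by intro y; simp [cD]; try ring),
      pd_cΓ1 μ hμ x h0 0 2 0 0 0 2 (by intro y; simp [cD]; try ring)]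
    simp only [G, Fin.sum_univ_four]
    simp [cD, cA, cB, cA', cB', cA'', cB'']
    field_simp
    ring
  · rw [pd_cΓ1 μ hμ x h0 (-1/2) 2 2 1 2 1 (by intro y; simp [cD]; try ring),
      pd_cΓ1 μ hμ x h0 0 2 1 1 0 2 (by intro y; simp [cD]; try ring)]
    simp only [G, Fin.sum_univ_four]
    simp [cD, cA, cB, cA', cB', cA'', cB'']
    field_simp
    ring
  · rw [pd_cΓ0 μ hμ hμ' x h0 (-1/2) 3 3 0 3 0 (by intro y; simp [cD]; try ring),
      pd_cΓ1 μ hμ x h0 0 3 0 0 0 3 (by intro y; simp [cD]; try ring)]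
    simp only [G, Fin.sum_univ_four]
    simp [cD, cA, cB, cA', cB', cA'', cB'']
    field_simp
    ring
  · rw [pd_cΓ1 μ hμ x h0 (-1/2) 3 3 1 3 1 (by intro y; simp [cD]; try ring),
      pd_cΓ1 μ hμ x h0 0 3 1 1 0 3 (by intro y; simp [cD]; try ring)]
    simp only [G, Fin.sum_univ_four]
    simp [cD, cA, cB, cA', cB', cA'', cB'']
    field_simp
    ring

end
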